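/- Let V be a finite set, let 𝒫 and 𝒬 be partitions of V such that 𝒫 refines 𝒬 (every part of 𝒬 is a union of parts of 𝒫). Assume: (i) every part of 𝒫 has at least 2 elements, and every part of 𝒫 of odd cardinality has at least 3 elements; (ii) every part of 𝒬 of even cardinality is either a single even-cardinality part of 𝒫 or the union of exactly two odd-cardinality parts of 𝒫; (iii) every part of 𝒬 of odd cardinality is either the union of exactly one odd-cardinality part and one even-cardinality part of 𝒫, or the union of exactly three odd-cardinality parts of 𝒫. Let o(𝒫) denote the number of odd-cardinality parts of 𝒫, and let o(𝒬) and e(𝒬) denote the numbers of odd- and even-cardinality parts of 𝒬, respectively. Then 2·o(𝒫) + 3·o(𝒬) + 2·e(𝒬) ≤ |V|. (This is Claim 1 in the analysis of the Node-Reduction-Algorithm on r-well-structured point sets, with 𝒫 the components of G_{i−1} and 𝒬 the components of G_i.) -/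

import Mathlib

/-!
A part `p` of `P` has `|p| ≥ 3` if it is odd and `|p| ≥ 2` if it is even. Let every odd part of `P`
give away `2` of its elements: an odd part keeps at least `1` and an even part at least `2`. What
the parts of `P` inside `q ∈ Q` keep then pays for `3` if `q` is odd and for `2` if `q` is even, as
the allowed shapes give `2`, `1 + 1` for even `q` and `1 + 2`, `1 + 1 + 1` for odd `q`.
-/

open scoped BigOperators

/-- `parts` is a partition of the finite set `V`: a finite family of nonempty subsets
of `V` such that each element of `V` lies in exactly one part. -/
def IsFinsetPartition {α : Type*} (V : Finset α) (parts : Finset (Finset α)) : Prop :=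
  (∀ P ∈ parts, P.Nonempty) ∧
  (∀ P ∈ parts, P ⊆ V) ∧
  (∀ v ∈ V, ∃! P, P ∈ parts ∧ v ∈ P)

section

open Finset

variable {α : Type*}

lemma IsFinsetPartition.pairwiseDisjoint {V : Finset α} {parts : Finset (Finset α)}
    (h : IsFinsetPartition V parts) : (parts : Set (Finset α)).PairwiseDisjoint id :=
  fun _ hA _ hB hAB ↦ disjoint_left.2 fun v hvA hvB ↦
    hAB ((h.2.2 v (h.2.1 _ hA hvA)).unique ⟨hA, hvA⟩ ⟨hB, hvB⟩)

lemma sum_card_le_card_of_pairwiseDisjoint {ι : Type*} {s : Finset ι} {f : ι → Finset α}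
    {V : Finset α} (hdisj : (s : Set ι).PairwiseDisjoint f) (hV : ∀ i ∈ s, f i ⊆ V) :
    ∑ i ∈ s, #(f i) ≤ #V := by
  classical
  rw [← card_biUnion hdisj]
  exact card_le_card (biUnion_subset.2 hV)

lemma sum_sum_filter_le_sum_of_pairwiseDisjoint {β M : Type*} [PartialOrder β] [OrderBot β]
    [DecidableLE β] [AddCommMonoid M] [PartialOrder M] [IsOrderedAddMonoid M]
    [CanonicallyOrderedAdd M] {P Q : Finset β} (hQ : (Q : Set β).PairwiseDisjoint id)
    (hP : ⊥ ∉ P) (f : β → M) :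
    ∑ q ∈ Q, ∑ p ∈ P with p ≤ q, f p ≤ ∑ p ∈ P, f p := by
  classical
  have hdisj : (Q : Set β).PairwiseDisjoint fun q ↦ {p ∈ P | p ≤ q} := by
    refine fun q hq q' hq' hne ↦ disjoint_left.2 fun p hp hp' ↦ hP ?_
    obtain ⟨hpP, hpq⟩ := mem_filter.1 hp
    have hbot : p = ⊥ := le_bot_iff.1 (hQ hq hq' hne hpq (mem_filter.1 hp').2)
    exact hbot ▸ hpP
  rw [← sum_biUnion hdisj]
  exact sum_le_sum_of_subset (biUnion_subset.2 fun q _ ↦ filter_subset _ _)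

/-- The weight of a finite set that depends only on the parity of its cardinality: `a` if it is
odd, `b` if it is even. Weights `(3, 2)` bound cardinalities of parts from below, and weights
`(1, 2)` are what remains of them once each odd part has given away `2`. -/
def parityWeight (a b : ℕ) (s : Finset α) : ℕ := if Odd #s then a else b

lemma sum_parityWeight (a b : ℕ) (S : Finset (Finset α)) :
    ∑ s ∈ S, parityWeight a b s = a * #{s ∈ S | Odd #s} + b * #{s ∈ S | Even #s} := by
  simp only [parityWeight, sum_ite, sum_const, smul_eq_mul, Nat.not_odd_iff_even, mul_comm]

lemma parityWeight_le_card {s : Finset α} (hs : 2 ≤ #s) : parityWeight 3 2 s ≤ #s := by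
  unfold parityWeight
  split_ifs with hodd
  · obtain ⟨k, hk⟩ := hodd
    omega
  · exact hs

lemma two_le_sum_parityWeight {S : Finset (Finset α)}
    (h : (∃ p ∈ S, Even #p) ∨ ∃ p₁ ∈ S, ∃ p₂ ∈ S, p₁ ≠ p₂ ∧ Odd #p₁ ∧ Odd #p₂) :
    2 ≤ ∑ p ∈ S, parityWeight 1 2 p := by
  rw [sum_parityWeight]
  rcases h with ⟨p, hp, even⟩ | ⟨p₁, h₁, p₂, h₂, hne, odd₁, odd₂⟩
  · have : 0 < #{p ∈ S | Even #p} := card_pos.2 ⟨p, mem_filter.2 ⟨hp, even⟩⟩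
    omega
  · have : 1 < #{p ∈ S | Odd #p} :=
      one_lt_card.2 ⟨p₁, mem_filter.2 ⟨h₁, odd₁⟩, p₂, mem_filter.2 ⟨h₂, odd₂⟩, hne⟩
    omega

lemma three_le_sum_parityWeight {S : Finset (Finset α)}
    (h : (∃ p₁ ∈ S, ∃ p₂ ∈ S, Odd #p₁ ∧ Even #p₂) ∨
      ∃ p₁ ∈ S, ∃ p₂ ∈ S, ∃ p₃ ∈ S, p₁ ≠ p₂ ∧ p₁ ≠ p₃ ∧ p₂ ≠ p₃ ∧
        Odd #p₁ ∧ Odd #p₂ ∧ Odd #p₃) :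
    3 ≤ ∑ p ∈ S, parityWeight 1 2 p := by
  rw [sum_parityWeight]
  rcases h with ⟨p₁, h₁, p₂, h₂, odd₁, even₂⟩ |
    ⟨p₁, h₁, p₂, h₂, p₃, h₃, h₁₂, h₁₃, h₂₃, odd₁, odd₂, odd₃⟩
  · have : 0 < #{p ∈ S | Odd #p} := card_pos.2 ⟨p₁, mem_filter.2 ⟨h₁, odd₁⟩⟩
    have : 0 < #{p ∈ S | Even #p} := card_pos.2 ⟨p₂, mem_filter.2 ⟨h₂, even₂⟩⟩
    omega
  · have : 2 < #{p ∈ S | Odd #p} :=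
      two_lt_card.2 ⟨p₁, mem_filter.2 ⟨h₁, odd₁⟩, p₂, mem_filter.2 ⟨h₂, odd₂⟩,
        p₃, mem_filter.2 ⟨h₃, odd₃⟩, h₁₂, h₁₃, h₂₃⟩
    omega

theorem stmt7_general [DecidableEq α] (V : Finset α) (P Q : Finset (Finset α))
    (hPV : ∀ p ∈ P, p ⊆ V) (hP : (P : Set (Finset α)).PairwiseDisjoint id)
    (hQ : (Q : Set (Finset α)).PairwiseDisjoint id) (hP2 : ∀ p ∈ P, 2 ≤ #p)
    (hQeven : ∀ q ∈ Q, Even #q →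
      (∃ p ∈ P, Even #p ∧ p ⊆ q) ∨
      ∃ p₁ ∈ P, ∃ p₂ ∈ P, p₁ ≠ p₂ ∧ Odd #p₁ ∧ Odd #p₂ ∧ p₁ ∪ p₂ ⊆ q)
    (hQodd : ∀ q ∈ Q, Odd #q →
      (∃ p₁ ∈ P, ∃ p₂ ∈ P, Odd #p₁ ∧ Even #p₂ ∧ p₁ ∪ p₂ ⊆ q) ∨
      ∃ p₁ ∈ P, ∃ p₂ ∈ P, ∃ p₃ ∈ P, p₁ ≠ p₂ ∧ p₁ ≠ p₃ ∧ p₂ ≠ p₃ ∧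
        Odd #p₁ ∧ Odd #p₂ ∧ Odd #p₃ ∧ p₁ ∪ p₂ ∪ p₃ ⊆ q) :
    2 * #{p ∈ P | Odd #p} + 3 * #{q ∈ Q | Odd #q} + 2 * #{q ∈ Q | Even #q} ≤ #V := by
  have hbot : ⊥ ∉ P := fun h ↦ by simpa using hP2 ⊥ h
  have hlocal : ∀ q ∈ Q, parityWeight 3 2 q ≤ ∑ p ∈ P with p ≤ q, parityWeight 1 2 p := by
    intro q hq
    simp only [union_subset_iff] at hQeven hQodd
    rw [parityWeight]
    split_ifs with hodd
    · exact three_le_sum_parityWeight (by grind)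
    · exact two_le_sum_parityWeight (by grind)
  calc 2 * #{p ∈ P | Odd #p} + 3 * #{q ∈ Q | Odd #q} + 2 * #{q ∈ Q | Even #q}
      = 2 * #{p ∈ P | Odd #p} + ∑ q ∈ Q, parityWeight 3 2 q := by
        rw [sum_parityWeight, add_assoc]
    _ ≤ 2 * #{p ∈ P | Odd #p} + ∑ q ∈ Q, ∑ p ∈ P with p ≤ q, parityWeight 1 2 p := by
        gcongr with q hq
        exact hlocal q hq
    _ ≤ 2 * #{p ∈ P | Odd #p} + ∑ p ∈ P, parityWeight 1 2 p := by
        gcongr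
        exact sum_sum_filter_le_sum_of_pairwiseDisjoint hQ hbot _
    _ = ∑ p ∈ P, parityWeight 3 2 p := by
        simp only [sum_parityWeight]
        ring
    _ ≤ ∑ p ∈ P, #p := sum_le_sum fun p hp ↦ parityWeight_le_card (hP2 p hp)
    _ ≤ #V := sum_card_le_card_of_pairwiseDisjoint hP hPV

end

theorem stmt7 {α : Type*} [DecidableEq α] (V : Finset α)
    (P Q : Finset (Finset α))
    (hP : IsFinsetPartition V P) (hQ : IsFinsetPartition V Q)
    -- `P` refines `Q`: every part of `Q` is a union of parts of `P`
    (hrefine : ∀ p ∈ P, ∃ q ∈ Q, p ⊆ q)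
    -- (i) every part of `P` has at least 2 elements, odd parts at least 3
    (hP2 : ∀ p ∈ P, 2 ≤ p.card)
    (hP3 : ∀ p ∈ P, Odd p.card → 3 ≤ p.card)
    -- (ii) even parts of `Q` are a single even part of `P` or a union of two odd parts of `P`
    (hQeven : ∀ q ∈ Q, Even q.card →
      q ∈ P ∨ ∃ p₁ ∈ P, ∃ p₂ ∈ P, p₁ ≠ p₂ ∧ Odd p₁.card ∧ Odd p₂.card ∧ q = p₁ ∪ p₂)
    -- (iii) odd parts of `Q` are a union of one odd and one even part of `P`,
    -- or a union of three odd parts of `P`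
    (hQodd : ∀ q ∈ Q, Odd q.card →
      (∃ p₁ ∈ P, ∃ p₂ ∈ P, Odd p₁.card ∧ Even p₂.card ∧ q = p₁ ∪ p₂) ∨
      (∃ p₁ ∈ P, ∃ p₂ ∈ P, ∃ p₃ ∈ P, p₁ ≠ p₂ ∧ p₁ ≠ p₃ ∧ p₂ ≠ p₃ ∧
        Odd p₁.card ∧ Odd p₂.card ∧ Odd p₃.card ∧ q = p₁ ∪ p₂ ∪ p₃)) :
    2 * (P.filter fun p => Odd p.card).card
      + 3 * (Q.filter fun q => Odd q.card).card
      + 2 * (Q.filter fun q => Even q.card).card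
      ≤ V.card := by
  exact stmt7_general V P Q hP.2.1 hP.pairwiseDisjoint hQ.pairwiseDisjoint hP2
    (by grind) (by grind)
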